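/- There exist absolute constants c > 0 and c' > 0 such that the following holds for every ε ∈ (0,1) and every δ ∈ (0, c'ε). Let B := (1/δ)·log(1 + (ε/2)/(1−ε/2)) and suppose g : ℝ → [0,∞) is measurable with (1−ε)·φ(x−δ) ≤ g(x) ≤ φ(x−δ) for all x ∈ ℝ, ∫_ℝ g(x) dx = 1−ε/2, and g(x) = (1−ε/2)·φ(x) for all x ∈ [−B+δ/2, B+δ/2]. Then, setting γ := (1/δ)·log(1 + (ε/2)/(1−ε/2)) and m := ⌊c·γ²/log γ⌋, there exists a (real) polynomial p such that the function f(x) := g(x) + p(x)·1{|x| ≤ 1} satisfies (1−ε)·φ(x−δ) ≤ f(x) ≤ φ(x−δ) for all x ∈ ℝ, and ∫_ℝ xⁱ f(x) dx / ∫_ℝ f(x) dx = E_{z∼N(0,1)}[zⁱ] for every integer i with 1 ≤ i ≤ m. -/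

import Mathlib

open MeasureTheory

/-- The probability density function of the standard Gaussian `N(0,1)`. -/
noncomputable def gaussPDF (x : ℝ) : ℝ := Real.exp (-x ^ 2 / 2) / Real.sqrt (2 * Real.pi)

/-- `B(ε,δ) = γ(ε,δ) = (1/δ)·log(1 + (ε/2)/(1−ε/2))`. -/
noncomputable def Bconst (ε δ : ℝ) : ℝ := (1 / δ) * Real.log (1 + (ε / 2) / (1 - ε / 2))


lemma exists_pt (p : Polynomial ℝ) (a b : ℝ) (hab : a < b) (ha : -1 ≤ a) (hb : b ≤ 1) :
    ∃ y ∈ Set.Icc a b, p.eval y ^ 2 * (b - a) ≤ ∫ x in (-1:ℝ)..1, p.eval x ^ 2 := by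
  have hc : Continuous fun x => p.eval x ^ 2 := by fun_prop
  by_contra! h
  obtain ⟨y, hy, hmin⟩ := isCompact_Icc.exists_isMinOn (Set.nonempty_Icc.2 hab.le) (hc.continuousOn (s := Set.Icc a b))
  have h1 := h y hy
  have h2 : ∫ x in a..b, p.eval y ^ 2 ≤ ∫ x in a..b, p.eval x ^ 2 := by
    apply intervalIntegral.integral_mono_on hab.le (by simp) (hc.intervalIntegrable _ _)
    intro x hx
    exact hmin hx
  have h3 : ∫ x in a..b, p.eval x ^ 2 ≤ ∫ x in (-1:ℝ)..1, p.eval x ^ 2 := by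
    apply intervalIntegral.integral_mono_interval ha hab.le hb
    · exact Filter.Eventually.of_forall fun x => sq_nonneg _
    · exact hc.intervalIntegrable _ _
  simp at h2
  linarith

lemma poly_bound (n : ℕ) (hn : 1 ≤ n) (p : Polynomial ℝ) (hp : p.degree < n) (x : ℝ) :
    |p.eval x| ≤ (4 * n : ℝ) ^ (n + 1) * max 1 |x| ^ (n - 1) *
      √(∫ x in (-1:ℝ)..1, p.eval x ^ 2) := by
  set S := ∫ x in (-1:ℝ)..1, p.eval x ^ 2 with hS
  have hn0 : (1:ℝ) ≤ n := by exact_mod_cast hn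
  have hex : ∀ k : ℕ, k < n → ∃ y ∈ Set.Icc ((k:ℝ)/n) ((2*k+1)/(2*n)), p.eval y ^ 2 ≤ 2 * n * S := by
    intro k hk
    have hk' : (k:ℝ) + 1 ≤ n := by exact_mod_cast hk
    have hd : (2*(k:ℝ)+1)/(2*n) - (k:ℝ)/n = 1/(2*n) := by field_simp; ring
    obtain ⟨y, hy, h⟩ := exists_pt p ((k:ℝ)/n) ((2*k+1)/(2*n))
      (by rw [← sub_pos, hd]; positivity) (by have : 0 ≤ (k:ℝ)/n := by positivity
                                              linarith)
      (by rw [div_le_one (by positivity)]; linarith)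
    refine ⟨y, hy, ?_⟩
    rw [hd] at h
    rw [mul_one_div, div_le_iff₀ (by positivity)] at h
    linarith
  choose! v hv hvS using hex
  have hsep : ∀ i j, i < n → j < n → i < j → 1/(2*n:ℝ) ≤ v j - v i := by
    intro i j hi hj hij
    have h1 := (hv i hi).2
    have h2 := (hv j hj).1
    have h3 : ((i:ℝ)+1)/n ≤ j/n := by
      gcongr; exact_mod_cast hij
    have h4 : ((i:ℝ)+1)/n - (2*i+1)/(2*n) = 1/(2*n) := by field_simp; ring
    linarith
  have hsep' : ∀ i j, i < n → j < n → i ≠ j → 1/(2*n:ℝ) ≤ |v i - v j| := by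
    intro i j hi hj hij
    rcases lt_or_gt_of_ne hij with h | h
    · rw [abs_sub_comm]; exact (hsep i j hi hj h).trans (le_abs_self _)
    · exact (hsep j i hj hi h).trans (le_abs_self _)
  have hpos : 0 < 1/(2*n:ℝ) := by positivity
  have hinj : Set.InjOn v (Finset.range n) := by
    intro i hi j hj hij
    by_contra hne
    have := hsep' i j (by simpa using hi) (by simpa using hj) hne
    rw [hij, sub_self, abs_zero] at this
    linarith
  have hint := Lagrange.eq_interpolate hinj (f := p) (by simpa using hp)
  set M := max 1 |x| with hM
  have hM1 : 1 ≤ M := le_max_left _ _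
  have hMx : |x| ≤ M := le_max_right _ _
  have hev : p.eval x = ∑ i ∈ Finset.range n, p.eval (v i) *
      ∏ j ∈ (Finset.range n).erase i, ((v i - v j)⁻¹ * (x - v j)) := by
    conv_lhs => rw [hint]
    simp [Lagrange.interpolate_apply, Polynomial.eval_finsetSum, Lagrange.basis,
      Polynomial.eval_prod, Lagrange.basisDivisor]
  have hterm : ∀ i ∈ Finset.range n, |p.eval (v i) *
      ∏ j ∈ (Finset.range n).erase i, ((v i - v j)⁻¹ * (x - v j))| ≤
      (2 * n * √S) * (4 * n * M) ^ (n - 1) := by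
    intro i hi
    have hi' : i < n := by simpa using hi
    rw [abs_mul, Finset.abs_prod]
    have hcard : ((Finset.range n).erase i).card = n - 1 := by
      rw [Finset.card_erase_of_mem hi, Finset.card_range]
    have h1 : |p.eval (v i)| ≤ 2 * n * √S := by
      have h := Real.abs_le_sqrt (hvS i hi')
      refine h.trans ?_
      rw [Real.sqrt_mul (by positivity)]
      gcongr
      rw [Real.sqrt_le_left (by positivity)]
      nlinarith
    have h2 : ∏ j ∈ (Finset.range n).erase i, |(v i - v j)⁻¹ * (x - v j)| ≤ (4 * n * M) ^ (n - 1) := by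
      rw [← hcard, ← Finset.prod_const]
      apply Finset.prod_le_prod
      · intro j _; positivity
      · intro j hj
        have hj' : j < n := by simpa using (Finset.mem_erase.1 hj).2
        have hne : j ≠ i := (Finset.mem_erase.1 hj).1
        have h3 := hsep' i j hi' hj' hne.symm
        have h4 : |v i - v j|⁻¹ ≤ 2 * n := by
          rw [inv_le_comm₀ (lt_of_lt_of_le hpos h3) (by positivity)]
          simpa using h3
        have hv0 : 0 ≤ v j := le_trans (by positivity) (hv j hj').1
        have hv1 : v j ≤ 1 := by
          refine (hv j hj').2.trans ?_
          rw [div_le_one (by positivity)]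
          have : (j:ℝ) + 1 ≤ n := by exact_mod_cast hj'
          linarith
        have h5 : |x - v j| ≤ 2 * M := by
          refine (abs_sub _ _).trans ?_
          rw [abs_of_nonneg hv0]; linarith
        rw [abs_mul, abs_inv]
        calc _ ≤ (2 * n) * (2 * M) := by gcongr
          _ = _ := by ring
    gcongr
  rw [hev]
  refine (Finset.abs_sum_le_sum_abs _ _).trans ((Finset.sum_le_sum hterm).trans ?_)
  rw [Finset.sum_const, Finset.card_range, nsmul_eq_mul, mul_pow]
  obtain ⟨m, rfl⟩ : ∃ m, n = m + 1 := ⟨n - 1, by omega⟩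
  simp only [Nat.add_sub_cancel]
  set N : ℝ := ((m+1 : ℕ) : ℝ)
  have : (4 * N)^(m+1+1) * M^m * √S - N * (2 * N * √S * ((4*N)^m * M^m)) = 14 * N^2 * ((4*N)^m * M^m * √S) := by ring
  have : 0 ≤ 14 * N^2 * ((4*N)^m * M^m * √S) := by positivity
  linarith


lemma exists_poly (n : ℕ) (hn : 1 ≤ n) (h : ℝ → ℝ) (W : ℝ)
    (hi : ∀ i < n, Integrable fun x => x ^ i * h x)
    (hM : Integrable fun x => max 1 |x| ^ (n - 1) * |h x|)
    (hW : ∫ x, max 1 |x| ^ (n - 1) * |h x| ≤ W) :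
    ∃ p : Polynomial ℝ, (∀ i < n, ∫ x in (-1:ℝ)..1, x ^ i * p.eval x = ∫ x, x ^ i * h x) ∧
      ∀ x, |x| ≤ 1 → |p.eval x| ≤ ((4 * n : ℝ) ^ (n + 1)) ^ 2 * W := by
  let T : Polynomial.degreeLT ℝ n →ₗ[ℝ] (Fin n → ℝ) :=
    { toFun := fun p i => ∫ x in (-1:ℝ)..1, x ^ (i:ℕ) * p.1.eval x
      map_add' := by
        intro p q
        ext i
        simp only [Submodule.coe_add, Polynomial.eval_add, mul_add, Pi.add_apply]
        apply intervalIntegral.integral_add <;>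
          exact Continuous.intervalIntegrable (by fun_prop) _ _
      map_smul' := by
        intro c p
        ext i
        simp only [Submodule.coe_smul, Polynomial.eval_smul, smul_eq_mul, Pi.smul_apply,
          RingHom.id_apply]
        rw [← intervalIntegral.integral_const_mul]
        congr 1; ext x; ring }
  have hexp : ∀ p ∈ Polynomial.degreeLT ℝ n, ∀ x, p.eval x = ∑ i ∈ Finset.range n, p.coeff i * x ^ i := by
    intro p hp x
    rw [Polynomial.mem_degreeLT] at hp
    apply Polynomial.eval_eq_sum_range'
    by_cases h0 : p = 0
    · simp [h0]; omega
    · exact (Polynomial.natDegree_lt_iff_degree_lt h0).2 hp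
  have hsq : ∀ p ∈ Polynomial.degreeLT ℝ n, ∫ x in (-1:ℝ)..1, p.eval x ^ 2 =
      ∑ i ∈ Finset.range n, p.coeff i * ∫ x in (-1:ℝ)..1, x ^ i * p.eval x := by
    intro p hp
    simp_rw [← intervalIntegral.integral_const_mul]
    rw [← intervalIntegral.integral_finsetSum]
    · congr 1; ext x
      rw [pow_two]
      nth_rewrite 1 [hexp p hp x]
      rw [Finset.sum_mul]
      apply Finset.sum_congr rfl; intros; ring
    · intro i _
      exact Continuous.intervalIntegrable (by fun_prop) _ _
  have hinj : Function.Injective T := by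
    rw [injective_iff_map_eq_zero]
    intro p hp
    have h0 : ∫ x in (-1:ℝ)..1, p.1.eval x ^ 2 = 0 := by
      rw [hsq p.1 p.2]
      apply Finset.sum_eq_zero
      intro i hi
      have := congrFun hp ⟨i, by simpa using hi⟩
      have h' : ∫ x in (-1:ℝ)..1, x ^ i * p.1.eval x = 0 := this
      rw [h', mul_zero]
    apply Subtype.ext
    apply Polynomial.funext
    intro x
    have := poly_bound n hn p.1 (Polynomial.mem_degreeLT.1 p.2) x
    rw [h0] at this
    simpa using this
  have hfin : FiniteDimensional ℝ (Polynomial.degreeLT ℝ n) :=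
    (Polynomial.degreeLTEquiv ℝ n).symm.finiteDimensional
  have hsurj : Function.Surjective T :=
    (LinearMap.injective_iff_surjective_of_finrank_eq_finrank
      (Polynomial.degreeLTEquiv ℝ n).finrank_eq).1 hinj
  obtain ⟨⟨p, hp⟩, hpT⟩ := hsurj fun i => ∫ x, x ^ (i:ℕ) * h x
  have hmom : ∀ i < n, ∫ x in (-1:ℝ)..1, x ^ i * p.eval x = ∫ x, x ^ i * h x :=
    fun i hi => congrFun hpT ⟨i, hi⟩
  refine ⟨p, hmom, ?_⟩
  set S := ∫ x in (-1:ℝ)..1, p.eval x ^ 2 with hS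
  set K := (4 * n : ℝ) ^ (n + 1) with hK
  have hb := poly_bound n hn p (Polynomial.mem_degreeLT.1 hp)
  have hS0 : 0 ≤ S := by
    apply intervalIntegral.integral_nonneg (by norm_num)
    intros; positivity
  have hW0 : 0 ≤ W := le_trans (integral_nonneg fun x => by positivity) hW
  have hSe : S = ∫ x, p.eval x * h x := by
    rw [hS, hsq p hp]
    have : ∀ x, p.eval x * h x = ∑ i ∈ Finset.range n, p.coeff i * (x ^ i * h x) := by
      intro x
      rw [hexp p hp x, Finset.sum_mul]
      apply Finset.sum_congr rfl; intros; ring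
    simp_rw [this]
    rw [integral_finsetSum]
    · apply Finset.sum_congr rfl
      intro i hi'
      rw [integral_const_mul, hmom i (by simpa using hi')]
    · intro i hi'
      exact (hi i (by simpa using hi')).const_mul _
  have hSle : S ≤ K * √S * W := by
    calc S = ∫ x, p.eval x * h x := hSe
      _ ≤ ∫ x, |p.eval x * h x| := (le_abs_self _).trans abs_integral_le_integral_abs
      _ ≤ ∫ x, K * √S * (max 1 |x| ^ (n - 1) * |h x|) := by
          apply integral_mono_of_nonneg
          · exact Filter.Eventually.of_forall fun x => abs_nonneg _
          · exact hM.const_mul _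
          · refine Filter.Eventually.of_forall fun x => ?_
            simp only [abs_mul]
            calc _ ≤ K * max 1 |x| ^ (n - 1) * √S * |h x| := by
                  gcongr; exact hb x
              _ = _ := by ring
      _ ≤ K * √S * W := by
          rw [integral_const_mul]; gcongr
  have hsS : √S ≤ K * W := by
    rcases eq_or_lt_of_le (Real.sqrt_nonneg S) with h0 | h0
    · rw [← h0]; positivity
    · have := Real.mul_self_sqrt hS0
      have h2 : √S * √S ≤ √S * (K * W) := by linarith
      exact le_of_mul_le_mul_left h2 h0
  intro x hx
  have := hb x
  rw [max_eq_left hx, one_pow, mul_one] at this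
  calc _ ≤ K * √S := this
    _ ≤ K * (K * W) := by gcongr
    _ = _ := by ring

lemma gauss_shift (x δ : ℝ) :
    gaussPDF (x - δ) = gaussPDF x * Real.exp (x * δ - δ ^ 2 / 2) := by
  unfold gaussPDF
  rw [div_mul_eq_mul_div, ← Real.exp_add]
  congr 2; ring

lemma gauss_pos (x : ℝ) : 0 < gaussPDF x := by
  unfold gaussPDF; positivity

lemma gauss_le (x : ℝ) : gaussPDF x ≤ Real.exp (-x ^ 2 / 2) := by
  unfold gaussPDF
  apply div_le_self (Real.exp_pos _).le
  rw [Real.one_le_sqrt]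
  linarith [Real.pi_gt_three]

lemma gauss_ge (x : ℝ) (hx : |x| ≤ 1) : 3 / 20 ≤ gaussPDF x := by
  unfold gaussPDF
  have h1 : x ^ 2 ≤ 1 := by rw [← sq_abs]; nlinarith [abs_nonneg x]
  have h2 : (1:ℝ) / 2 ≤ Real.exp (-x ^ 2 / 2) := by
    have := Real.add_one_le_exp (-x ^ 2 / 2)
    linarith
  have h3 : √(2 * Real.pi) ≤ 3 := by
    rw [Real.sqrt_le_left (by norm_num)]
    linarith [Real.pi_lt_d2]
  rw [le_div_iff₀ (by positivity)]
  linarith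

lemma gauss_int (i : ℕ) : Integrable fun x => x ^ i * gaussPDF x := by
  have h := integrable_rpow_mul_exp_neg_mul_sq (b := 1/2) (by norm_num) (s := i)
    (by have : (0:ℝ) ≤ i := by positivity
        linarith)
  refine (h.div_const (√(2 * Real.pi))).congr (Filter.Eventually.of_forall fun x => ?_)
  simp only [gaussPDF, Real.rpow_natCast]
  rw [mul_div_assoc]
  have : -(1 / 2) * x ^ 2 = -x ^ 2 / 2 := by ring
  rw [this]

lemma gauss_one : ∫ x, gaussPDF x = 1 := by
  have h := ProbabilityTheory.integral_gaussianPDFReal_eq_one 0 (v := 1) (by norm_num)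
  rw [← h]
  congr 1; ext x
  simp [gaussPDF, ProbabilityTheory.gaussianPDFReal]
  ring

lemma abs_exp_sub_one_le' (t : ℝ) : |Real.exp t - 1| ≤ |t| * Real.exp |t| := by
  have h1 := Real.add_one_le_exp t
  have h2 := Real.add_one_le_exp (-t)
  have h3 : Real.exp t * Real.exp (-t) = 1 := by rw [← Real.exp_add]; simp
  have h0 := Real.exp_pos t
  rcases le_total 0 t with h | h
  · rw [abs_of_nonneg h, abs_of_nonneg (by linarith)]
    nlinarith
  · rw [abs_of_nonpos h]
    have : 1 ≤ Real.exp (-t) := Real.one_le_exp (by linarith)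
    have : Real.exp t ≤ 1 := Real.exp_le_one_iff.2 h
    rw [abs_of_nonpos (by linarith)]
    nlinarith

lemma h_bound (ε δ x gx : ℝ) (hε : 0 < ε) (hδ : 0 < δ) (hδε : δ ≤ ε) (hε1 : ε ≤ 1)
    (h1 : (1 - ε) * gaussPDF (x - δ) ≤ gx) (h2 : gx ≤ gaussPDF (x - δ)) (hx : 100 ≤ |x|) :
    |(1 - ε / 2) * gaussPDF x - gx| ≤ ε * Real.exp (-x ^ 2 / 4) := by
  set y := |x| with hy
  rw [gauss_shift] at h1 h2
  have hG := gauss_pos x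
  set G := gaussPDF x
  set t := x * δ - δ ^ 2 / 2 with ht
  have htle : |t| ≤ ε * (y + 1) := by
    calc |t| ≤ |x * δ| + |δ ^ 2 / 2| := abs_sub _ _
      _ = y * δ + δ ^ 2 / 2 := by rw [abs_mul, abs_of_pos hδ, abs_of_pos (show 0 < δ ^ 2 / 2 by positivity)]
      _ ≤ ε * (y + 1) := by nlinarith
  have htle' : |t| ≤ y + 1 := htle.trans (by nlinarith)
  set E := Real.exp (y + 1) with hE
  have hEy : y + 1 ≤ E := by have := Real.add_one_le_exp (y + 1); linarith
  have hE1 : 1 ≤ E := by linarith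
  have hm : |Real.exp t - 1| ≤ ε * E ^ 2 := by
    calc _ ≤ _ := abs_exp_sub_one_le' t
      _ ≤ ε * (y + 1) * Real.exp (y + 1) := by gcongr
      _ ≤ ε * E * E := by gcongr
      _ = _ := by ring
  have het : Real.exp t ≤ E := Real.exp_le_exp.2 ((le_abs_self _).trans htle')
  have het0 := Real.exp_pos t
  have hEE : E ≤ E ^ 2 := by nlinarith
  have hkey : |(1 - ε / 2) * G - gx| ≤ G * (ε * (3 * E ^ 2)) := by
    rw [abs_le] at hm ⊢
    constructor
    · have : G * Real.exp t ≤ G * (1 + ε * E ^ 2) := by gcongr; linarith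
      have h3 : G * (ε * 1) ≤ G * (ε * E ^ 2) := by gcongr; linarith
      have h4 : 0 ≤ G * ε := by positivity
      nlinarith
    · have h5 : G * (1 - ε * E ^ 2) ≤ G * Real.exp t := by gcongr; linarith
      have h3 : ε * (G * Real.exp t) ≤ ε * (G * E ^ 2) := by gcongr; linarith
      have h4 : 0 ≤ G * ε := by positivity
      have h6 : 0 ≤ G * (ε * E ^ 2) := by positivity
      nlinarith
  refine hkey.trans ?_
  have h3 : (3:ℝ) ≤ Real.exp 2 := by have := Real.add_one_le_exp (2:ℝ); linarith
  have hx2 : x ^ 2 = y ^ 2 := by rw [hy, sq_abs]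
  calc G * (ε * (3 * E ^ 2)) ≤ Real.exp (-x ^ 2 / 2) * (ε * (Real.exp 2 * E ^ 2)) := by
        gcongr; exact gauss_le x
    _ = ε * Real.exp (-x ^ 2 / 2 + (2 + (y + 1) * 2)) := by
        rw [Real.exp_add, Real.exp_add, hE, ← Real.exp_nat_mul]; push_cast; ring_nf
    _ ≤ _ := by
        gcongr
        rw [hx2]; nlinarith

lemma pow_bound (B y : ℝ) (m : ℕ) (hB : 200 ≤ B) (hy : B / 2 ≤ y)
    (hm : (m:ℝ) ≤ 1 / 1024 * B ^ 2 / Real.log B) : y ^ m ≤ Real.exp (y ^ 2 / 16) := by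
  have hy0 : 0 < y := by linarith
  have hL : 1 ≤ Real.log B := by
    rw [Real.le_log_iff_exp_le (by linarith)]
    linarith [Real.exp_one_lt_d9]
  rw [le_div_iff₀ (by linarith)] at hm
  rw [← Real.rpow_natCast, Real.rpow_def_of_pos hy0, Real.exp_le_exp]
  have hm0 : (0:ℝ) ≤ m := by positivity
  have hmB : (m:ℝ) ≤ 1 / 1024 * B ^ 2 := by nlinarith
  have hlog : Real.log y ≤ Real.log B + y / B := by
    have h1 : Real.log (y / B) ≤ y / B - 1 := Real.log_le_sub_one_of_pos (by positivity)
    rw [Real.log_div (by positivity) (by positivity)] at h1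
    linarith
  have h2 : (m:ℝ) * (y / B) ≤ 1 / 1024 * B * y := by
    calc (m:ℝ) * (y / B) ≤ 1 / 1024 * B ^ 2 * (y / B) := by gcongr
      _ = _ := by field_simp
  nlinarith

lemma K_bound (B : ℝ) (m : ℕ) (hB : 200 ≤ B) (hm1 : 1 ≤ m)
    (hm : (m:ℝ) ≤ 1 / 1024 * B ^ 2 / Real.log B) :
    ((4 * (m + 1 : ℕ) : ℝ) ^ (m + 1 + 1)) ^ 2 ≤ Real.exp (B ^ 2 / 64) := by
  have hL : 1 ≤ Real.log B := by
    rw [Real.le_log_iff_exp_le (by linarith)]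
    linarith [Real.exp_one_lt_d9]
  rw [le_div_iff₀ (by linarith)] at hm
  have hm0 : (1:ℝ) ≤ m := by exact_mod_cast hm1
  have hmB : (m:ℝ) ≤ 1 / 1024 * B ^ 2 := by nlinarith
  have h8 : 8 * (m:ℝ) ≤ B ^ 2 := by nlinarith
  have hlog : Real.log (8 * m) ≤ 2 * Real.log B := by
    have := Real.log_le_log (by positivity) h8
    rwa [Real.log_pow] at this
  calc ((4 * (m + 1 : ℕ) : ℝ) ^ (m + 1 + 1)) ^ 2 = (4 * (m + 1) : ℝ) ^ (2 * m + 4) := by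
        push_cast; rw [← pow_mul]; congr 1; ring
    _ ≤ (8 * m : ℝ) ^ (2 * m + 4) := by
        apply pow_le_pow_left₀ (by positivity); linarith
    _ ≤ (8 * m : ℝ) ^ (6 * m) := by gcongr; linarith; omega
    _ = Real.exp (Real.log (8 * m) * (6 * m : ℕ)) := by
        rw [← Real.rpow_natCast, Real.rpow_def_of_pos (by positivity)]
    _ ≤ _ := by
        rw [Real.exp_le_exp]; push_cast
        nlinarith

lemma Bconst_ge (ε δ : ℝ) (hε : 0 < ε) (hε1 : ε < 1) (hδ : 0 < δ) (hd : δ < 1 / 400 * ε) :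
    200 ≤ Bconst ε δ := by
  unfold Bconst
  have h1 : 1 + ε / 2 / (1 - ε / 2) = (1 - ε / 2)⁻¹ := by
    have : 1 - ε / 2 ≠ 0 := by linarith
    have : (2:ℝ) - ε ≠ 0 := by linarith
    field_simp; ring
  rw [h1, Real.log_inv]
  have := Real.log_le_sub_one_of_pos (show 0 < 1 - ε / 2 by linarith)
  rw [one_div_mul_eq_div, le_div_iff₀ hδ]
  linarith

lemma sandwich (ε δ x q : ℝ) (hε : 0 < ε) (hε1 : ε < 1) (hδ : 0 < δ) (hd : δ < 1 / 400 * ε)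
    (hx : |x| ≤ 1) (hq : |q| ≤ ε / 20) :
    (1 - ε) * gaussPDF (x - δ) ≤ (1 - ε / 2) * gaussPDF x + q ∧
      (1 - ε / 2) * gaussPDF x + q ≤ gaussPDF (x - δ) := by
  rw [gauss_shift]
  have hG := gauss_ge x hx
  set G := gaussPDF x
  rw [abs_le] at hx hq
  set t := x * δ - δ ^ 2 / 2 with ht
  have ht1 : t ≤ δ := by nlinarith
  have ht2 : -(2 * δ) ≤ t := by nlinarith
  have he1 := Real.add_one_le_exp t
  have he2 : Real.exp t ≤ 1 + 2 * δ := by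
    have h1 : Real.exp t ≤ Real.exp δ := Real.exp_le_exp.2 ht1
    have h2 := Real.add_one_le_exp (-δ)
    have h3 : Real.exp δ * Real.exp (-δ) = 1 := by rw [← Real.exp_add]; simp
    have h4 := Real.exp_pos δ
    nlinarith
  have hGp : 0 < G := by linarith
  have hGε : 3 / 20 * ε ≤ G * ε := by gcongr
  constructor
  · have h1 : (1 - ε) * (G * Real.exp t) ≤ (1 - ε) * (G * (1 + 2 * δ)) := by
      have : 0 ≤ 1 - ε := by linarith
      gcongr
    have h2 : (1 - ε) * (G * (1 + 2 * δ)) ≤ G * (1 - ε + 2 * δ) := by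
      have : 0 ≤ G * (ε * δ) := by positivity
      nlinarith
    have h3 : G * (2 * δ) ≤ G * (1 / 200 * ε) :=
      mul_le_mul_of_nonneg_left (by linarith) hGp.le
    nlinarith
  · have h1 : G * (1 - 2 * δ) ≤ G * Real.exp t := by gcongr; linarith
    have h3 : G * (2 * δ) ≤ G * (1 / 200 * ε) :=
      mul_le_mul_of_nonneg_left (by linarith) hGp.le
    nlinarith

lemma ind_int (p : Polynomial ℝ) (i : ℕ) :
    (fun x : ℝ => x ^ i * (if |x| ≤ 1 then p.eval x else 0)) =
      (Set.Icc (-1:ℝ) 1).indicator fun x => x ^ i * p.eval x := by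
  ext x
  simp only [Set.indicator, Set.mem_Icc, ← abs_le]
  split_ifs <;> simp

lemma moment_eq (ε : ℝ) (g : ℝ → ℝ) (p : Polynomial ℝ) (i : ℕ)
    (hh : Integrable fun x => x ^ i * ((1 - ε / 2) * gaussPDF x - g x))
    (hp : ∫ x in (-1:ℝ)..1, x ^ i * p.eval x = ∫ x, x ^ i * ((1 - ε / 2) * gaussPDF x - g x)) :
    ∫ x, x ^ i * (g x + (if |x| ≤ 1 then p.eval x else 0)) =
      (1 - ε / 2) * ∫ x, x ^ i * gaussPDF x := by
  have hI : Integrable (fun x : ℝ => x ^ i * (if |x| ≤ 1 then p.eval x else 0)) := by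
    rw [ind_int, integrable_indicator_iff measurableSet_Icc]
    exact Continuous.integrableOn_Icc (by fun_prop)
  have hIe : ∫ x : ℝ, x ^ i * (if |x| ≤ 1 then p.eval x else 0) =
      ∫ x in (-1:ℝ)..1, x ^ i * p.eval x := by
    rw [ind_int, integral_indicator measurableSet_Icc, integral_Icc_eq_integral_Ioc,
      intervalIntegral.integral_of_le (by norm_num)]
  have hφ := (gauss_int i).const_mul (1 - ε / 2)
  have heq : ∀ x, x ^ i * (g x + (if |x| ≤ 1 then p.eval x else 0)) =
      ((1 - ε / 2) * (x ^ i * gaussPDF x) - x ^ i * ((1 - ε / 2) * gaussPDF x - g x)) +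
        x ^ i * (if |x| ≤ 1 then p.eval x else 0) := by intro x; ring
  simp_rw [heq]
  rw [integral_add (f := fun x => (1 - ε / 2) * (x ^ i * gaussPDF x) -
    x ^ i * ((1 - ε / 2) * gaussPDF x - g x)) (hφ.sub hh) hI, integral_sub hφ hh, hIe, hp, integral_const_mul]
  ring

/-- There exist absolute constants `c, c' > 0` such that for `ε ∈ (0,1)`, `δ ∈ (0, c'ε)`,
if `g` is as produced in the first step (sandwiched between `(1−ε)·φ(·−δ)` and `φ(·−δ)`,
with total integral `1−ε/2`, equal to `(1−ε/2)·φ` on `[−B+δ/2, B+δ/2]`), then there is a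
polynomial `p` so that `f(x) = g(x) + p(x)·1{|x| ≤ 1}` is still a valid `ε`-corruption of
`N(δ,1)` and its visible-sample distribution matches the first `m = ⌊c·γ²/log γ⌋`
moments of `N(0,1)`. -/
theorem stmt2 :
    ∃ c c' : ℝ, 0 < c ∧ 0 < c' ∧
      ∀ ε δ : ℝ, ε ∈ Set.Ioo (0 : ℝ) 1 → δ ∈ Set.Ioo 0 (c' * ε) →
        ∀ g : ℝ → ℝ, Measurable g → (∀ x : ℝ, 0 ≤ g x) →
          (∀ x : ℝ, (1 - ε) * gaussPDF (x - δ) ≤ g x ∧ g x ≤ gaussPDF (x - δ)) →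
          (∫ x : ℝ, g x) = 1 - ε / 2 →
          (∀ x ∈ Set.Icc (-(Bconst ε δ) + δ / 2) (Bconst ε δ + δ / 2),
            g x = (1 - ε / 2) * gaussPDF x) →
          ∃ p : Polynomial ℝ,
            (∀ x : ℝ,
              (1 - ε) * gaussPDF (x - δ) ≤ g x + (if |x| ≤ 1 then p.eval x else 0) ∧
              g x + (if |x| ≤ 1 then p.eval x else 0) ≤ gaussPDF (x - δ)) ∧
            ∀ i : ℕ, 1 ≤ i →
              i ≤ ⌊c * (Bconst ε δ) ^ 2 / Real.log (Bconst ε δ)⌋₊ →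
              (∫ x : ℝ, x ^ i * (g x + (if |x| ≤ 1 then p.eval x else 0))) /
                  (∫ x : ℝ, g x + (if |x| ≤ 1 then p.eval x else 0)) =
                ∫ z : ℝ, z ^ i * gaussPDF z := by
  refine ⟨1 / 1024, 1 / 400, by norm_num, by norm_num, ?_⟩
  rintro ε δ ⟨hε, hε1⟩ ⟨hδ, hd⟩ g hgm hg0 hg _ hgB
  have hB := Bconst_ge ε δ hε hε1 hδ hd
  set B := Bconst ε δ with hBdef
  set m := ⌊1 / 1024 * B ^ 2 / Real.log B⌋₊ with hmdef
  rcases Nat.eq_zero_or_pos m with hm0 | hm1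
  · refine ⟨0, fun x => by simpa using hg x, fun i h1 h2 => by omega⟩
  have hL : 0 < Real.log B := Real.log_pos (by linarith)
  have hm : (m:ℝ) ≤ 1 / 1024 * B ^ 2 / Real.log B := Nat.floor_le (by positivity)
  set h : ℝ → ℝ := fun x => (1 - ε / 2) * gaussPDF x - g x with hh
  have hgaussm : Measurable gaussPDF := by unfold gaussPDF; fun_prop
  have hmeas : Measurable h := by fun_prop
  have hzero : ∀ x, |x| < B / 2 → h x = 0 := by
    intro x hx
    rw [abs_lt] at hx
    simp only [hh]
    rw [hgB x ⟨by linarith, by linarith⟩, sub_self]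
  set D := ε * Real.exp (-B ^ 2 / 32) with hD
  have hb : ∀ x, max 1 |x| ^ m * |h x| ≤ D * Real.exp (-(1 / 16) * x ^ 2) := by
    intro x
    rcases lt_or_ge |x| (B / 2) with hx | hx
    · rw [hzero x hx, abs_zero, mul_zero]; positivity
    · rw [max_eq_right (by linarith)]
      have h1 := pow_bound B |x| m hB hx hm
      have h2 := h_bound ε δ x (g x) hε hδ (by linarith) hε1.le (hg x).1 (hg x).2 (by linarith)
      rw [sq_abs] at h1
      have hx2 : B ^ 2 / 4 ≤ x ^ 2 := by rw [← sq_abs x]; nlinarith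
      calc |x| ^ m * |h x| ≤ Real.exp (x ^ 2 / 16) * (ε * Real.exp (-x ^ 2 / 4)) := by gcongr
        _ = ε * Real.exp (x ^ 2 / 16 + -x ^ 2 / 4) := by rw [Real.exp_add]; ring
        _ ≤ ε * Real.exp (-B ^ 2 / 32 + -(1 / 16) * x ^ 2) := by
            apply mul_le_mul_of_nonneg_left (Real.exp_le_exp.2 (by linarith)) hε.le
        _ = _ := by rw [Real.exp_add, hD]; ring
  have hdom : Integrable fun x : ℝ => D * Real.exp (-(1 / 16) * x ^ 2) :=
    (integrable_exp_neg_mul_sq (by norm_num)).const_mul _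
  have hMint : Integrable fun x => max 1 |x| ^ m * |h x| := by
    refine hdom.mono' (by fun_prop) (Filter.Eventually.of_forall fun x => ?_)
    rw [Real.norm_of_nonneg (by positivity)]
    exact hb x
  have hiint : ∀ i < m + 1, Integrable fun x => x ^ i * h x := by
    intro i hi
    refine hMint.mono' (by fun_prop) (Filter.Eventually.of_forall fun x => ?_)
    rw [Real.norm_eq_abs, abs_mul, abs_pow]
    gcongr
    calc |x| ^ i ≤ max 1 |x| ^ i := by gcongr; exact le_max_right _ _
      _ ≤ max 1 |x| ^ m := pow_le_pow_right₀ (le_max_left _ _) (by omega)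
  have hW : ∫ x, max 1 |x| ^ m * |h x| ≤ 8 * D := by
    calc _ ≤ ∫ x : ℝ, D * Real.exp (-(1 / 16) * x ^ 2) := integral_mono hMint hdom hb
      _ = D * √(Real.pi / (1 / 16)) := by rw [integral_const_mul, integral_gaussian]
      _ ≤ D * 8 := by
          gcongr
          rw [Real.sqrt_le_left (by norm_num)]
          linarith [Real.pi_lt_four]
      _ = _ := by ring
  obtain ⟨p, hp1, hp2⟩ := exists_poly (m + 1) (by omega) h (8 * D) hiint
    (by simpa using hMint) (by simpa using hW)
  have hpb : ∀ x, |x| ≤ 1 → |p.eval x| ≤ ε / 20 := by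
    intro x hx
    refine (hp2 x hx).trans ?_
    have hK := K_bound B m hB hm1 hm
    calc _ ≤ Real.exp (B ^ 2 / 64) * (8 * D) := by gcongr
      _ = 8 * ε * Real.exp (B ^ 2 / 64 + -B ^ 2 / 32) := by rw [hD, Real.exp_add]; ring
      _ = 8 * ε * (Real.exp (B ^ 2 / 64))⁻¹ := by rw [← Real.exp_neg]; congr 2; ring
      _ ≤ 8 * ε * (160:ℝ)⁻¹ := by
          gcongr
          have := Real.add_one_le_exp (B ^ 2 / 64)
          nlinarith
      _ = _ := by ring
  refine ⟨p, ?_, ?_⟩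
  · intro x
    by_cases hx : |x| ≤ 1
    · rw [if_pos hx]
      have := abs_le.1 hx
      rw [hgB x ⟨by linarith, by linarith⟩]
      exact sandwich ε δ x _ hε hε1 hδ hd hx (hpb x hx)
    · rw [if_neg hx, add_zero]; exact hg x
  · intro i _ him
    have h0 := moment_eq ε g p 0 (hiint 0 (by omega)) (hp1 0 (by omega))
    simp only [pow_zero, one_mul] at h0
    rw [gauss_one, mul_one] at h0
    rw [moment_eq ε g p i (hiint i (by omega)) (hp1 i (by omega)), h0]
    have : 1 - ε / 2 ≠ 0 := by linarith
    exact mul_div_cancel_left₀ _ this
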